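/- arXiv:1010.5967 — 3 statements merged into one kernel-verified Lean document; each statement's English description precedes it below -/
import Mathlib

section
/- Let β ≥ 0, δ > 0, λ ≥ 0 and let ξ be a nonzero real number. Set p = 1 − βξ²δ − ξ²δ²/(2(1 + λ²ξ²)) and c = (1 − βξ²δ)². Then the (quarter-)discriminant p² − c of the EPB characteristic quadratic q² − 2pq + c has the same sign as F(δ) = δ² + 4β(1 + λ²ξ²)δ − 4(1 + λ²ξ²)/ξ²; in particular p² − c ≤ 0 if and only if F(δ) ≤ 0, and p² − c = (ξ⁴δ²/(4(1 + λ²ξ²)²))·F(δ). -/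
/-!
With `u = 1 − βξ²δ`, `D = 1 + λ²ξ²` and `v = ξ²δ²/(2D)`, the quarter-discriminant is
`(u − v)² − u² = v(v − 2u)`, where `v − 2u` is `ξ²/(2D)` times the quadratic `F(δ)`. For `δ ≠ 0`
the factor `v` is positive, so `F(δ)` alone decides the sign; for `δ = 0` the discriminant
vanishes while `F(0) = −4D/ξ²` is negative, so both are nonpositive.
-/

section Identity

variable {K : Type*} [Field K]

/-- The quarter-discriminant `p² − c` of the EPB characteristic quadratic `q² − 2pq + c`. The
parameter `D` stands for `1 + λ²ξ²`, the only expression through which `λ` enters. -/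
def epbQuarterDiscrim (β δ ξ D : K) : K :=
  (1 - β * ξ ^ 2 * δ - ξ ^ 2 * δ ^ 2 / (2 * D)) ^ 2 - (1 - β * ξ ^ 2 * δ) ^ 2

/-- The quadratic `F(δ)` in the time step that decides the sign of the quarter-discriminant,
with `D` standing for `1 + λ²ξ²`. -/
def epbSignQuadratic (β δ ξ D : K) : K :=
  δ ^ 2 + 4 * β * D * δ - 4 * D / ξ ^ 2

theorem mul_epbSignQuadratic [NeZero (2 : K)] (β δ : K) {ξ D : K} (hD : D ≠ 0) (hξ : ξ ≠ 0) :
    ξ ^ 2 / (2 * D) * epbSignQuadratic β δ ξ D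
      = ξ ^ 2 * δ ^ 2 / (2 * D) - 2 * (1 - β * ξ ^ 2 * δ) := by
  unfold epbSignQuadratic
  field_simp
  ring

theorem epbQuarterDiscrim_eq_mul [NeZero (2 : K)] (β δ : K) {ξ D : K} (hD : D ≠ 0) (hξ : ξ ≠ 0) :
    epbQuarterDiscrim β δ ξ D
      = ξ ^ 4 * δ ^ 2 / (4 * D ^ 2) * epbSignQuadratic β δ ξ D := by
  calc epbQuarterDiscrim β δ ξ D
      = ξ ^ 2 * δ ^ 2 / (2 * D) * (ξ ^ 2 * δ ^ 2 / (2 * D) - 2 * (1 - β * ξ ^ 2 * δ)) := by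
        unfold epbQuarterDiscrim
        ring
    _ = ξ ^ 2 * δ ^ 2 / (2 * D) * (ξ ^ 2 / (2 * D) * epbSignQuadratic β δ ξ D) := by
        rw [mul_epbSignQuadratic β δ hD hξ]
    _ = ξ ^ 4 * δ ^ 2 / (4 * D ^ 2) * epbSignQuadratic β δ ξ D := by
        rw [← mul_assoc, div_mul_div_comm]
        congr 2 <;> ring

end Identity

section Sign

variable {K : Type*} [Field K] [LinearOrder K] [IsStrictOrderedRing K]

theorem epbSignQuadratic_zero_nonpos (β ξ : K) {D : K} (hD : 0 ≤ D) :
    epbSignQuadratic β 0 ξ D ≤ 0 := by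
  have : 0 ≤ 4 * D / ξ ^ 2 := by positivity
  simpa [epbSignQuadratic] using this

theorem epbQuarterDiscrim_nonpos_iff (β δ : K) {ξ D : K} (hD : 0 < D) (hξ : ξ ≠ 0) :
    epbQuarterDiscrim β δ ξ D ≤ 0 ↔ epbSignQuadratic β δ ξ D ≤ 0 := by
  rcases eq_or_ne δ 0 with rfl | hδ
  · have discrim_zero : epbQuarterDiscrim β 0 ξ D = 0 := by simp [epbQuarterDiscrim]
    exact iff_of_true discrim_zero.le (epbSignQuadratic_zero_nonpos β ξ hD.le)
  · have factor_pos : 0 < ξ ^ 4 * δ ^ 2 / (4 * D ^ 2) := by positivity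
    rw [epbQuarterDiscrim_eq_mul β δ hD.ne' hξ, ← not_lt, ← not_lt,
      mul_pos_iff_of_pos_left factor_pos]

theorem epb_discriminant_sign_general (β δ : K) {ξ D : K} (hD : 0 < D) (hξ : ξ ≠ 0) :
    (epbQuarterDiscrim β δ ξ D ≤ 0 ↔ epbSignQuadratic β δ ξ D ≤ 0)
    ∧ epbQuarterDiscrim β δ ξ D
      = ξ ^ 4 * δ ^ 2 / (4 * D ^ 2) * epbSignQuadratic β δ ξ D :=
  ⟨epbQuarterDiscrim_nonpos_iff β δ hD hξ, epbQuarterDiscrim_eq_mul β δ hD.ne' hξ⟩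

end Sign

/-- The quarter-discriminant `p² − c` of the EPB characteristic quadratic,
with `p = 1 − βξ²δ − ξ²δ²/(2(1 + λ²ξ²))` and `c = (1 − βξ²δ)²`,
has the same sign as `F(δ) = δ² + 4β(1 + λ²ξ²)δ − 4(1 + λ²ξ²)/ξ²`:
it equals `(ξ⁴δ²/(4(1 + λ²ξ²)²))·F(δ)`, and is nonpositive iff `F(δ) ≤ 0`. -/
theorem epb_discriminant_sign (β δ lam ξ : ℝ) (hβ : 0 ≤ β) (hδ : 0 < δ) (hlam : 0 ≤ lam)
    (hξ : ξ ≠ 0) :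
    ((1 - β * ξ ^ 2 * δ - ξ ^ 2 * δ ^ 2 / (2 * (1 + lam ^ 2 * ξ ^ 2))) ^ 2
        - (1 - β * ξ ^ 2 * δ) ^ 2 ≤ 0
      ↔ δ ^ 2 + 4 * β * (1 + lam ^ 2 * ξ ^ 2) * δ - 4 * (1 + lam ^ 2 * ξ ^ 2) / ξ ^ 2 ≤ 0)
    ∧ (1 - β * ξ ^ 2 * δ - ξ ^ 2 * δ ^ 2 / (2 * (1 + lam ^ 2 * ξ ^ 2))) ^ 2
        - (1 - β * ξ ^ 2 * δ) ^ 2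
      = (ξ ^ 4 * δ ^ 2 / (4 * (1 + lam ^ 2 * ξ ^ 2) ^ 2))
          * (δ ^ 2 + 4 * β * (1 + lam ^ 2 * ξ ^ 2) * δ - 4 * (1 + lam ^ 2 * ξ ^ 2) / ξ ^ 2) := by
  exact epb_discriminant_sign_general β δ (by positivity) hξ
end

section
/- Let β ≥ 0, δ > 0, λ ≠ 0 and let ξ be a nonzero real number. Set p = 1 − βξ²δ + λ²ξ⁴δ²/(2(1 + λ²ξ²)) and c = (1 − βξ²δ)² + ξ²δ². Then the (quarter-)discriminant p² − c of the REPB characteristic quadratic q² − 2pq + c has the same sign as F(δ) = δ² − 4β((1 + λ²ξ²)/(λ²ξ²))δ − 4(1 + λ²ξ²)/(λ⁴ξ⁶); in particular p² − c ≤ 0 if and only if F(δ) ≤ 0, and p² − c = (λ⁴ξ⁸δ²/(4(1 + λ²ξ²)²))·F(δ). -/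
/-!
Only the term `λ²ξ⁴δ²/(2(1 + λ²ξ²))` of `p` and the term `ξ²δ²` of `c` survive the cancellation of
`(1 - βξ²δ)²` in `p² - c`, and both carry a factor `δ²`. The constant term of the remaining
quadratic in `δ` simplifies by `λ²ξ⁴/(1 + λ²ξ²) - ξ² = -ξ²/(1 + λ²ξ²)`; dividing by its leading
coefficient `λ⁴ξ⁸/(4(1 + λ²ξ²)²)` gives the monic quadratic `F`.
-/

section Field

variable {K : Type*} [Field K]

/-- Half the sum `p` of the two amplification factors of the REPB scheme, i.e. the coefficient in
the characteristic quadratic `q² - 2pq + c`; `lam` is the scaled Debye length `λ`. -/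
def repbHalfSum (β δ lam ξ : K) : K :=
  1 - β * ξ ^ 2 * δ + lam ^ 2 * ξ ^ 4 * δ ^ 2 / (2 * (1 + lam ^ 2 * ξ ^ 2))

/-- The product `c` of the two amplification factors of the REPB scheme. -/
def repbProd (β δ ξ : K) : K :=
  (1 - β * ξ ^ 2 * δ) ^ 2 + ξ ^ 2 * δ ^ 2

/-- The quarter-discriminant `p² - c` of the REPB characteristic quadratic, whose sign decides
whether the amplification factors are complex conjugates. -/
def repbQuarterDiscrim (β δ lam ξ : K) : K :=
  repbHalfSum β δ lam ξ ^ 2 - repbProd β δ ξ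

/-- The monic quadratic `F(δ)` in the time step whose sign is that of the quarter-discriminant. -/
def repbStepQuadratic (β δ lam ξ : K) : K :=
  δ ^ 2 - 4 * β * ((1 + lam ^ 2 * ξ ^ 2) / (lam ^ 2 * ξ ^ 2)) * δ
    - 4 * (1 + lam ^ 2 * ξ ^ 2) / (lam ^ 4 * ξ ^ 6)

theorem repbQuarterDiscrim_eq_sq_mul [NeZero (2 : K)] (β δ : K) {lam ξ : K}
    (hs : 1 + lam ^ 2 * ξ ^ 2 ≠ 0) :
    repbQuarterDiscrim β δ lam ξ =
      δ ^ 2 * ((lam ^ 2 * ξ ^ 4 / (2 * (1 + lam ^ 2 * ξ ^ 2))) ^ 2 * δ ^ 2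
        - β * lam ^ 2 * ξ ^ 6 / (1 + lam ^ 2 * ξ ^ 2) * δ - ξ ^ 2 / (1 + lam ^ 2 * ξ ^ 2)) := by
  set r := lam ^ 2 * ξ ^ 4 / (2 * (1 + lam ^ 2 * ξ ^ 2)) with hr
  have two_mul_r : 2 * r = lam ^ 2 * ξ ^ 4 / (1 + lam ^ 2 * ξ ^ 2) := by
    rw [hr]
    field_simp
  have const_term : 2 * r - ξ ^ 2 = -(ξ ^ 2 / (1 + lam ^ 2 * ξ ^ 2)) := by
    rw [two_mul_r]
    field_simp
    ring
  calc repbQuarterDiscrim β δ lam ξ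
      = (1 - β * ξ ^ 2 * δ + r * δ ^ 2) ^ 2 - ((1 - β * ξ ^ 2 * δ) ^ 2 + ξ ^ 2 * δ ^ 2) := by
        rw [repbQuarterDiscrim, repbHalfSum, repbProd, hr, div_mul_eq_mul_div]
    _ = δ ^ 2 * (r ^ 2 * δ ^ 2 - β * ξ ^ 2 * (2 * r) * δ + (2 * r - ξ ^ 2)) := by ring
    _ = δ ^ 2 * (r ^ 2 * δ ^ 2 - β * lam ^ 2 * ξ ^ 6 / (1 + lam ^ 2 * ξ ^ 2) * δ
          - ξ ^ 2 / (1 + lam ^ 2 * ξ ^ 2)) := by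
        rw [const_term, two_mul_r]
        ring

theorem repbQuarterDiscrim_eq_mul_repbStepQuadratic [NeZero (2 : K)] (β δ : K) {lam ξ : K}
    (hlam : lam ≠ 0) (hξ : ξ ≠ 0) (hs : 1 + lam ^ 2 * ξ ^ 2 ≠ 0) :
    repbQuarterDiscrim β δ lam ξ =
      lam ^ 4 * ξ ^ 8 * δ ^ 2 / (4 * (1 + lam ^ 2 * ξ ^ 2) ^ 2)
        * repbStepQuadratic β δ lam ξ := by
  have four_ne_zero : (4 : K) ≠ 0 := by
    rw [show (4 : K) = 2 ^ 2 by norm_num]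
    exact pow_ne_zero 2 two_ne_zero
  rw [repbQuarterDiscrim_eq_sq_mul β δ hs, repbStepQuadratic]
  field_simp
  ring

end Field

section LinearOrderedField

variable {K : Type*} [Field K] [LinearOrder K] [IsStrictOrderedRing K]

theorem sign_repbQuarterDiscrim (β : K) {δ lam ξ : K} (hδ : δ ≠ 0) (hlam : lam ≠ 0)
    (hξ : ξ ≠ 0) :
    SignType.sign (repbQuarterDiscrim β δ lam ξ) =
      SignType.sign (repbStepQuadratic β δ lam ξ) := by
  have factor_pos : 0 < lam ^ 4 * ξ ^ 8 * δ ^ 2 / (4 * (1 + lam ^ 2 * ξ ^ 2) ^ 2) := by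
    positivity
  rw [repbQuarterDiscrim_eq_mul_repbStepQuadratic β δ hlam hξ (by positivity), sign_mul,
    sign_pos factor_pos, one_mul]

theorem repb_discriminant_sign_general (β : K) {δ lam ξ : K} (hδ : δ ≠ 0) (hlam : lam ≠ 0)
    (hξ : ξ ≠ 0) :
    (repbQuarterDiscrim β δ lam ξ ≤ 0 ↔ repbStepQuadratic β δ lam ξ ≤ 0)
    ∧ repbQuarterDiscrim β δ lam ξ =
        lam ^ 4 * ξ ^ 8 * δ ^ 2 / (4 * (1 + lam ^ 2 * ξ ^ 2) ^ 2)
          * repbStepQuadratic β δ lam ξ := by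
  constructor
  · rw [← sign_nonpos_iff, sign_repbQuarterDiscrim β hδ hlam hξ, sign_nonpos_iff]
  · exact repbQuarterDiscrim_eq_mul_repbStepQuadratic β δ hlam hξ (by positivity)

end LinearOrderedField

/-- The quarter-discriminant `p² − c` of the REPB characteristic quadratic,
with `p = 1 − βξ²δ + λ²ξ⁴δ²/(2(1 + λ²ξ²))` and `c = (1 − βξ²δ)² + ξ²δ²`,
has the same sign as `F(δ) = δ² − 4β((1 + λ²ξ²)/(λ²ξ²))δ − 4(1 + λ²ξ²)/(λ⁴ξ⁶)`:
it equals `(λ⁴ξ⁸δ²/(4(1 + λ²ξ²)²))·F(δ)`, and is nonpositive iff `F(δ) ≤ 0`. -/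
theorem repb_discriminant_sign (β δ lam ξ : ℝ) (hβ : 0 ≤ β) (hδ : 0 < δ) (hlam : lam ≠ 0)
    (hξ : ξ ≠ 0) :
    ((1 - β * ξ ^ 2 * δ + lam ^ 2 * ξ ^ 4 * δ ^ 2 / (2 * (1 + lam ^ 2 * ξ ^ 2))) ^ 2
        - ((1 - β * ξ ^ 2 * δ) ^ 2 + ξ ^ 2 * δ ^ 2) ≤ 0
      ↔ δ ^ 2 - 4 * β * ((1 + lam ^ 2 * ξ ^ 2) / (lam ^ 2 * ξ ^ 2)) * δ
          - 4 * (1 + lam ^ 2 * ξ ^ 2) / (lam ^ 4 * ξ ^ 6) ≤ 0)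
    ∧ (1 - β * ξ ^ 2 * δ + lam ^ 2 * ξ ^ 4 * δ ^ 2 / (2 * (1 + lam ^ 2 * ξ ^ 2))) ^ 2
        - ((1 - β * ξ ^ 2 * δ) ^ 2 + ξ ^ 2 * δ ^ 2)
      = (lam ^ 4 * ξ ^ 8 * δ ^ 2 / (4 * (1 + lam ^ 2 * ξ ^ 2) ^ 2))
          * (δ ^ 2 - 4 * β * ((1 + lam ^ 2 * ξ ^ 2) / (lam ^ 2 * ξ ^ 2)) * δ
              - 4 * (1 + lam ^ 2 * ξ ^ 2) / (lam ^ 4 * ξ ^ 6)) :=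
  repb_discriminant_sign_general β hδ.ne' hlam hξ
end

section
/- Let β > 0, δ > 0, λ ≥ 0 and let ξ be a nonzero real number. If δ ≤ 1/(2βξ²) and δ ≤ √2·√(1 + λ²ξ²)/|ξ|, then F(δ) = δ² + 4β(1 + λ²ξ²)δ − 4(1 + λ²ξ²)/ξ² ≤ 0. -/
theorem sq_le_div_sq_of_le_sqrt_div_abs {x a c : ℝ} (hx : 0 < x) (h : x ≤ √a / |c|) :
    x ^ 2 ≤ a / c ^ 2 := by
  rwa [← Real.sqrt_sq_eq_abs, ← Real.sqrt_div' a (sq_nonneg c), Real.le_sqrt' hx] at h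

theorem sq_add_four_mul_sub_four_mul_nonpos {R : Type*} [CommRing R] [PartialOrder R]
    [IsOrderedRing R] {x b a k : R} (ha : 0 ≤ a) (hsq : x ^ 2 ≤ 2 * a * k)
    (hlin : 2 * b * x ≤ k) : x ^ 2 + 4 * b * a * x - 4 * a * k ≤ 0 := by
  -- Half of the constant term absorbs the square, the other half the linear term.
  calc x ^ 2 + 4 * b * a * x - 4 * a * k
      = (x ^ 2 - 2 * a * k) + 2 * a * (2 * b * x - k) := by ring
    _ ≤ 0 := add_nonpos (sub_nonpos.2 hsq)
      (mul_nonpos_of_nonneg_of_nonpos (mul_nonneg zero_le_two ha) (sub_nonpos.2 hlin))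

/-- Sufficient condition for the nonpositivity of the EPB discriminant quantity
`F(δ) = δ² + 4β(1 + λ²ξ²)δ − 4(1 + λ²ξ²)/ξ²`. -/
theorem epb_F_nonpos (β δ lam ξ : ℝ) (hβ : 0 < β) (hδ : 0 < δ) (hlam : 0 ≤ lam) (hξ : ξ ≠ 0)
    (h1 : δ ≤ 1 / (2 * β * ξ ^ 2))
    (h2 : δ ≤ Real.sqrt 2 * Real.sqrt (1 + lam ^ 2 * ξ ^ 2) / |ξ|) :
    δ ^ 2 + 4 * β * (1 + lam ^ 2 * ξ ^ 2) * δ - 4 * (1 + lam ^ 2 * ξ ^ 2) / ξ ^ 2 ≤ 0 := by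
  have hA : 0 ≤ 1 + lam ^ 2 * ξ ^ 2 := by positivity
  have hsq : δ ^ 2 ≤ 2 * (1 + lam ^ 2 * ξ ^ 2) / ξ ^ 2 := by
    rw [← Real.sqrt_mul zero_le_two] at h2
    exact sq_le_div_sq_of_le_sqrt_div_abs hδ h2
  have hlin : 2 * β * δ ≤ (ξ ^ 2)⁻¹ := by
    rwa [div_mul_eq_div_div_swap, le_div_iff₀' (by positivity), one_div] at h1
  rw [div_eq_mul_inv] at hsq ⊢
  exact sq_add_four_mul_sub_four_mul_nonpos hA hsq hlin
end
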